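/- Let φ : ℝ^m → ℝ^n be smooth with Δ³φ = 0, suppose ∫_{ℝ^m} (|dφ|² + |∇dφ|² + |∇²dφ|²) dx < ∞, and m > 2 with m ≠ 6. Then φ is constant. -/

import Mathlib

open MeasureTheory

/-- The partial derivative in the `i`-th coordinate direction. -/
noncomputable def pd {m : ℕ} {E : Type*} [NormedAddCommGroup E] [NormedSpace ℝ E]
    (i : Fin m) (f : (Fin m → ℝ) → E) (x : Fin m → ℝ) : E :=
  fderiv ℝ f x (Pi.single i 1)

/-- Euclidean inner product on `Fin n → ℝ`. -/
def dot {n : ℕ} (v w : Fin n → ℝ) : ℝ := ∑ α, v α * w α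
/-- The componentwise Euclidean Laplacian `Δ = ∑ᵢ ∂ᵢ²`. -/
noncomputable def lap {m n : ℕ} (f : (Fin m → ℝ) → Fin n → ℝ) :
    (Fin m → ℝ) → Fin n → ℝ :=
  fun x => ∑ i, pd i (pd i f) x

/-!
If `Δ v = 0` and `ψ` is a radial kernel with `∇Ψ(y) = ψ(y) y`, then `∫ ψ(y) v(x + R y) dy` does not
depend on `R`: its derivative in `R` is `∫ ∇Ψ(y) · ∇v(x + R y) dy = -R ∫ Ψ(y) Δv(x + R y) dy = 0`.
At `R = 0` it is `(∫ ψ) v(x)`. Take `v = Δᵏ u`, where `Δᵏ⁺¹ u = 0` and `u ∈ Lᵖ`, and move the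
Laplacians onto `ψ`: `R²ᵏ (∫ ψ) Δᵏ u(x) = ∫ Δᵏψ(y) u(x + R y) dy`. By Hölder's inequality the right
side is at most `‖Δᵏψ‖_q ‖u(x + R ·)‖_p = ‖Δᵏψ‖_q R^(-m/p) ‖u‖_p`, which tends to `0` as `R → ∞`.
Hence `Δᵏ u = 0`, and descending in `k` gives `u = 0`. Applied to the partial derivatives of `φ`,
which lie in `L²` by finite energy, this makes `φ` constant.
-/

open Set Filter Topology
open scoped ContDiff ENNReal

section Dilation

variable {V E : Type*} [NormedAddCommGroup V] [NormedSpace ℝ V] [FiniteDimensional ℝ V]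
  [MeasurableSpace V] [BorelSpace V] [NormedAddCommGroup E] {μ : Measure V} [μ.IsAddHaarMeasure]

theorem eLpNorm_comp_add_smul {p : ℝ≥0∞} (hp : p ≠ ⊤) {u : V → E}
    (hu : AEStronglyMeasurable u μ) (x : V) {R : ℝ} (hR : R ≠ 0) :
    eLpNorm (fun y => u (x + R • y)) p μ =
      ENNReal.ofReal |(R ^ Module.finrank ℝ V)⁻¹| ^ (1 / p).toReal * eLpNorm u p μ := by
  have htrans : MeasurePreserving (x + ·) μ μ := measurePreserving_add_left μ x
  have hmap := Measure.map_addHaar_smul μ hR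
  have hsm : AEStronglyMeasurable (fun y => u (x + y)) (μ.map (R • ·)) := by
    rw [hmap]
    exact (hu.comp_measurePreserving htrans).smul_measure _
  calc eLpNorm (fun y => u (x + R • y)) p μ
      = eLpNorm (fun y => u (x + y)) p (μ.map (R • ·)) :=
        (eLpNorm_map_measure hsm (measurable_const_smul R).aemeasurable).symm
    _ = ENNReal.ofReal |(R ^ Module.finrank ℝ V)⁻¹| ^ (1 / p).toReal *
          eLpNorm (fun y => u (x + y)) p μ := by
        rw [hmap, eLpNorm_smul_measure_of_ne_top hp, smul_eq_mul]
    _ = _ := by rw [← eLpNorm_comp_measurePreserving hu htrans]; rfl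

theorem tendsto_eLpNorm_comp_add_smul_atTop [Nontrivial V] {p : ℝ≥0∞} (hp0 : p ≠ 0)
    (hp : p ≠ ⊤) {u : V → E} (hu : MemLp u p μ) (x : V) :
    Tendsto (fun R : ℝ => eLpNorm (fun y => u (x + R • y)) p μ) atTop (𝓝 0) := by
  have hexp : 0 < (1 / p).toReal := ENNReal.toReal_pos (by simp [hp]) (by simp [hp0])
  have hfactor :
      Tendsto (fun R : ℝ => ENNReal.ofReal |(R ^ Module.finrank ℝ V)⁻¹|) atTop (𝓝 0) := by
    have hpow : Tendsto (fun R : ℝ => |(R ^ Module.finrank ℝ V)⁻¹|) atTop (𝓝 0) := by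
      simpa using (tendsto_inv_atTop_zero.comp
        (tendsto_pow_atTop (α := ℝ) (Module.finrank_pos (R := ℝ) (M := V)).ne')).abs
    simpa using ENNReal.tendsto_ofReal hpow
  have hprod := ENNReal.Tendsto.mul_const (hfactor.ennrpow_const (1 / p).toReal)
    (b := eLpNorm u p μ) (Or.inr hu.eLpNorm_ne_top)
  rw [ENNReal.zero_rpow_of_pos hexp, zero_mul] at hprod
  refine hprod.congr' ?_
  filter_upwards [eventually_ne_atTop 0] with R hR
  exact (eLpNorm_comp_add_smul hp hu.aestronglyMeasurable x hR).symm

theorem hasDerivAt_integral_smul_comp_add_smul [NormedSpace ℝ E] {ν : Measure V}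
    [IsFiniteMeasureOnCompacts ν] {ψ : V → ℝ} (hψ : Continuous ψ) (hψc : HasCompactSupport ψ)
    {v : V → E} (hv : ContDiff ℝ 1 v) (x : V) (R : ℝ) :
    HasDerivAt (fun r : ℝ => ∫ y, ψ y • v (x + r • y) ∂ν)
      (∫ y, ψ y • fderiv ℝ v (x + R • y) y ∂ν) R := by
  have : Continuous (fderiv ℝ v) := hv.continuous_fderiv one_ne_zero
  have hF : ∀ r : ℝ, Continuous fun y => ψ y • v (x + r • y) := fun r => by fun_prop
  have hF' : Continuous fun z : ℝ × V => ψ z.2 • fderiv ℝ v (x + z.1 • z.2) z.2 := by fun_prop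
  obtain ⟨C, hC⟩ :=
    ((isCompact_Icc (a := R - 1) (b := R + 1)).prod hψc).exists_bound_of_continuousOn
      hF'.continuousOn
  refine (hasDerivAt_integral_of_dominated_loc_of_deriv_le (s := Icc (R - 1) (R + 1))
    (F' := fun r y => ψ y • fderiv ℝ v (x + r • y) y)
    (bound := (tsupport ψ).indicator fun _ => C)
    (Icc_mem_nhds (by linarith) (by linarith))
    (.of_forall fun r => (hF r).aestronglyMeasurable)
    ((hF R).integrable_of_hasCompactSupport hψc.smul_right)
    (by fun_prop : Continuous _).aestronglyMeasurable ?_ ?_ ?_).2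
  · refine .of_forall fun y r hr => ?_
    by_cases hy : y ∈ tsupport ψ
    · simpa only [indicator_of_mem hy] using hC (r, y) ⟨hr, hy⟩
    · simp [hy, image_eq_zero_of_notMem_tsupport hy]
  · exact (integrable_indicator_iff hψc.measurableSet).2
      (integrableOn_const hψc.measure_lt_top.ne)
  · refine .of_forall fun y r _ => HasDerivAt.const_smul (ψ y) ?_
    have hray : HasDerivAt (fun r : ℝ => x + r • y) y r := by
      simpa using ((hasDerivAt_id r).smul_const y).const_add x
    exact (hv.differentiable one_ne_zero _).hasFDerivAt.comp_hasDerivAt r hray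

end Dilation

section PartialDerivatives

variable {m : ℕ} {E : Type*} [NormedAddCommGroup E] [NormedSpace ℝ E]
  {f : (Fin m → ℝ) → E} {ψ : (Fin m → ℝ) → ℝ}

theorem contDiff_pd {k l : ℕ∞ω} (hf : ContDiff ℝ l f) (hkl : k + 1 ≤ l) (i : Fin m) :
    ContDiff ℝ k (pd i f) :=
  (hf.fderiv_right hkl).clm_apply contDiff_const

theorem continuous_pd (hf : ContDiff ℝ 1 f) (i : Fin m) : Continuous (pd i f) :=
  (contDiff_pd hf (zero_add 1).le i).continuous

theorem hasCompactSupport_pd (hf : HasCompactSupport f) (i : Fin m) :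
    HasCompactSupport (pd i f) :=
  hf.fderiv_apply (𝕜 := ℝ) _

theorem pd_comm (hf : ContDiff ℝ 2 f) (i j : Fin m) : pd i (pd j f) = pd j (pd i f) := by
  have hdiff : Differentiable ℝ (fderiv ℝ f) :=
    (hf.fderiv_right (m := 1) (by norm_num)).differentiable one_ne_zero
  have pd_pd : ∀ (a b : Fin m) (x), pd a (pd b f) x =
      fderiv ℝ (fderiv ℝ f) x (Pi.single a 1) (Pi.single b 1) := fun a b x => by
    unfold pd
    rw [fderiv_clm_apply (hdiff x) (differentiableAt_const _)]
    simp
  funext x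
  rw [pd_pd, pd_pd]
  exact hf.contDiffAt.isSymmSndFDerivAt (by simp) _ _

theorem pd_comp_add_smul (i : Fin m) (x : Fin m → ℝ) (R : ℝ) :
    pd i (fun y => f (x + R • y)) = fun y => R • pd i f (x + R • y) := by
  funext y
  unfold pd
  rw [fderiv_comp_smul (f := fun z => f (x + z)), fderiv_comp_add_left]
  rfl

theorem pd_const_smul (i : Fin m) (c : ℝ) :
    pd i (fun y => c • f y) = fun y => c • pd i f y := by
  funext y
  change fderiv ℝ (c • f) y _ = _
  rw [fderiv_const_smul_field]
  rfl

theorem sum_smul_pd (x y : Fin m → ℝ) : ∑ i, y i • pd i f x = fderiv ℝ f x y := by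
  conv_rhs => rw [pi_eq_sum_univ' y, map_sum]
  simp [pd]

theorem eq_const_of_pd_eq_zero (hf : Differentiable ℝ f) (h : ∀ i, pd i f = 0)
    (x y : Fin m → ℝ) : f x = f y :=
  is_const_of_fderiv_eq_zero hf
    (fun z => ContinuousLinearMap.ext fun v => by simp [← sum_smul_pd, h]) x y

theorem integral_smul_pd (hψ : ContDiff ℝ 1 ψ) (hψc : HasCompactSupport ψ)
    (hf : ContDiff ℝ 1 f) (i : Fin m) :
    ∫ x, ψ x • pd i f x = -∫ x, pd i ψ x • f x :=
  integral_smul_fderiv_eq_neg_fderiv_smul_of_integrable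
    (((continuous_pd hψ i).smul hf.continuous).integrable_of_hasCompactSupport
      (hasCompactSupport_pd hψc i).smul_right)
    ((hψ.continuous.smul (continuous_pd hf i)).integrable_of_hasCompactSupport hψc.smul_right)
    ((hψ.continuous.smul hf.continuous).integrable_of_hasCompactSupport hψc.smul_right)
    (fun x _ => hψ.differentiable one_ne_zero x) (fun x _ => hf.differentiable one_ne_zero x)

theorem integral_smul_sum_pd (hψ : ContDiff ℝ 1 ψ) (hψc : HasCompactSupport ψ)
    {g : Fin m → (Fin m → ℝ) → E} (hg : ∀ i, ContDiff ℝ 1 (g i)) :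
    ∫ x, ψ x • ∑ i, pd i (g i) x = -∫ x, ∑ i, pd i ψ x • g i x := by
  simp only [Finset.smul_sum]
  rw [integral_finsetSum, integral_finsetSum, ← Finset.sum_neg_distrib]
  · exact Finset.sum_congr rfl fun i _ => integral_smul_pd hψ hψc (hg i) i
  · exact fun i _ => ((continuous_pd hψ i).smul (hg i).continuous
      ).integrable_of_hasCompactSupport (hasCompactSupport_pd hψc i).smul_right
  · exact fun i _ => (hψ.continuous.smul (continuous_pd (hg i) i)
      ).integrable_of_hasCompactSupport hψc.smul_right

end PartialDerivatives

section Laplacian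

variable {m : ℕ} {E : Type*} [NormedAddCommGroup E] [NormedSpace ℝ E]
  {f : (Fin m → ℝ) → E} {ψ : (Fin m → ℝ) → ℝ}

/-- The Laplacian `Δ = ∑ᵢ ∂ᵢ²` of a function with values in a normed space. It agrees with `lap`
by definition, and also applies to scalar test functions. -/
noncomputable def coordLaplacian (f : (Fin m → ℝ) → E) : (Fin m → ℝ) → E :=
  fun x => ∑ i, pd i (pd i f) x

theorem contDiff_coordLaplacian {k l : ℕ∞ω} (hf : ContDiff ℝ l f) (hkl : k + 2 ≤ l) :
    ContDiff ℝ k (coordLaplacian f) :=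
  ContDiff.sum fun i _ => contDiff_pd
    (contDiff_pd (k := k + 1) hf (by rwa [add_assoc, one_add_one_eq_two]) i) le_rfl i

theorem contDiff_coordLaplacian_iterate (hf : ContDiff ℝ ∞ f) (k : ℕ) :
    ContDiff ℝ ∞ (coordLaplacian^[k] f) :=
  Function.Iterate.rec _ hf (fun _ h => contDiff_coordLaplacian h le_rfl) k

theorem hasCompactSupport_coordLaplacian (hf : HasCompactSupport f) :
    HasCompactSupport (coordLaplacian f) := by
  have hsum : coordLaplacian f = ∑ i, pd i (pd i f) := by ext; simp [coordLaplacian]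
  rw [hsum]
  exact Finset.sum_induction _ HasCompactSupport (fun _ _ => .add) .zero
    fun i _ => hasCompactSupport_pd (hasCompactSupport_pd hf i) i

theorem hasCompactSupport_coordLaplacian_iterate (hf : HasCompactSupport f) (k : ℕ) :
    HasCompactSupport (coordLaplacian^[k] f) :=
  Function.Iterate.rec _ hf (fun _ => hasCompactSupport_coordLaplacian) k

theorem coordLaplacian_pd (hf : ContDiff ℝ 3 f) (k : Fin m) :
    coordLaplacian (pd k f) = pd k (coordLaplacian f) := by
  have hpd : ∀ i, ContDiff ℝ 2 (pd i f) := contDiff_pd hf two_add_one_eq_three.le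
  have hpd2 : ∀ i, Differentiable ℝ (pd i (pd i f)) := fun i =>
    (contDiff_pd (hpd i) one_add_one_eq_two.le i).differentiable one_ne_zero
  funext x
  have hsum : pd k (coordLaplacian f) x = ∑ i, pd k (pd i (pd i f)) x := by
    change fderiv ℝ (fun y => ∑ i, pd i (pd i f) y) x _ = _
    rw [fderiv_fun_sum fun i _ => hpd2 i x, sum_apply]
    rfl
  rw [hsum]
  refine Finset.sum_congr rfl fun i _ => ?_
  rw [pd_comm (hpd i) k i, pd_comm (hf.of_le (by norm_num)) k i]

theorem coordLaplacian_iterate_pd (hf : ContDiff ℝ ∞ f) (k : Fin m) (N : ℕ) :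
    coordLaplacian^[N] (pd k f) = pd k (coordLaplacian^[N] f) := by
  induction N with
  | zero => rfl
  | succ N ih =>
    rw [Function.iterate_succ_apply', Function.iterate_succ_apply', ih,
      coordLaplacian_pd ((contDiff_coordLaplacian_iterate hf N).of_le ENat.LEInfty.out)]

theorem coordLaplacian_comp_add_smul (x : Fin m → ℝ) (R : ℝ) :
    coordLaplacian (fun y => f (x + R • y)) = fun y => R ^ 2 • coordLaplacian f (x + R • y) := by
  funext y
  simp only [coordLaplacian, pd_comp_add_smul, pd_const_smul, smul_smul, Finset.smul_sum, sq]

theorem coordLaplacian_const_smul (c : ℝ) :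
    coordLaplacian (fun y => c • f y) = fun y => c • coordLaplacian f y := by
  funext y
  simp only [coordLaplacian, Finset.smul_sum, pd_const_smul]

theorem coordLaplacian_iterate_comp_add_smul (x : Fin m → ℝ) (R : ℝ) (k : ℕ) :
    coordLaplacian^[k] (fun y => f (x + R • y)) =
      fun y => R ^ (2 * k) • coordLaplacian^[k] f (x + R • y) := by
  induction k with
  | zero => simp
  | succ k ih =>
    rw [Function.iterate_succ_apply', Function.iterate_succ_apply', ih,
      coordLaplacian_const_smul (f := fun y => coordLaplacian^[k] f (x + R • y)),
      coordLaplacian_comp_add_smul]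
    simp only [smul_smul, mul_add, pow_add, mul_one]

theorem integral_smul_coordLaplacian (hψ : ContDiff ℝ 2 ψ) (hψc : HasCompactSupport ψ)
    (hf : ContDiff ℝ 2 f) :
    ∫ x, ψ x • coordLaplacian f x = ∫ x, coordLaplacian ψ x • f x := by
  have hψ' : ∀ i, ContDiff ℝ 1 (pd i ψ) := contDiff_pd hψ one_add_one_eq_two.le
  have hf' : ∀ i, ContDiff ℝ 1 (pd i f) := contDiff_pd hf one_add_one_eq_two.le
  have integrable_left : ∀ i, Integrable fun x => ψ x • pd i (pd i f) x := fun i =>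
    (hψ.continuous.smul (continuous_pd (hf' i) i)).integrable_of_hasCompactSupport hψc.smul_right
  have integrable_right : ∀ i, Integrable fun x => pd i (pd i ψ) x • f x := fun i =>
    ((continuous_pd (hψ' i) i).smul hf.continuous).integrable_of_hasCompactSupport
      (hasCompactSupport_pd (hasCompactSupport_pd hψc i) i).smul_right
  simp only [coordLaplacian, Finset.smul_sum, Finset.sum_smul]
  rw [integral_finsetSum _ fun i _ => integrable_left i,
    integral_finsetSum _ fun i _ => integrable_right i]
  refine Finset.sum_congr rfl fun i _ => ?_
  rw [integral_smul_pd (hψ.of_le one_le_two) hψc (hf' i),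
    integral_smul_pd (hψ' i) (hasCompactSupport_pd hψc i) (hf.of_le one_le_two), neg_neg]

theorem integral_smul_coordLaplacian_iterate (hψ : ContDiff ℝ ∞ ψ) (hψc : HasCompactSupport ψ)
    (hf : ContDiff ℝ ∞ f) (k : ℕ) :
    ∫ x, ψ x • coordLaplacian^[k] f x = ∫ x, coordLaplacian^[k] ψ x • f x := by
  induction k generalizing f with
  | zero => rfl
  | succ k ih =>
    rw [Function.iterate_succ_apply, ih (contDiff_coordLaplacian hf le_rfl),
      integral_smul_coordLaplacian ((contDiff_coordLaplacian_iterate hψ k).of_le ENat.LEInfty.out)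
        (hasCompactSupport_coordLaplacian_iterate hψc k) (hf.of_le ENat.LEInfty.out),
      Function.iterate_succ_apply']

end Laplacian

section MeanValue

variable {m : ℕ} {E : Type*} [NormedAddCommGroup E] [NormedSpace ℝ E]

/-- `Ψ` is a potential of the test function `ψ`, in the sense that `∇Ψ(y) = ψ(y) y`. This
identity is the form in which radial symmetry of `ψ` enters the mean value property. -/
structure IsRadialPotential (ψ Ψ : (Fin m → ℝ) → ℝ) : Prop where
  contDiff_kernel : ContDiff ℝ ∞ ψ
  hasCompactSupport_kernel : HasCompactSupport ψ
  contDiff : ContDiff ℝ ∞ Ψ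
  hasCompactSupport : HasCompactSupport Ψ
  pd_eq : ∀ i y, pd i Ψ y = ψ y * y i

theorem isCompact_sum_sq_le (r : ℝ) : IsCompact {y : Fin m → ℝ | ∑ i, y i ^ 2 ≤ r} := by
  refine Metric.isCompact_of_isClosed_isBounded
    (isClosed_le (by fun_prop) continuous_const) ?_
  refine isBounded_iff_forall_norm_le.2 ⟨√r, fun y hy => ?_⟩
  refine (pi_norm_le_iff_of_nonneg (Real.sqrt_nonneg r)).2 fun i => Real.abs_le_sqrt ?_
  exact (Finset.single_le_sum (f := fun i => y i ^ 2) (fun _ _ => sq_nonneg _)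
    (Finset.mem_univ i)).trans hy

theorem hasCompactSupport_comp_one_sub_sum_sq {g : ℝ → ℝ} (hg : ∀ t ≤ 0, g t = 0) :
    HasCompactSupport fun y : Fin m → ℝ => g (1 - ∑ i, y i ^ 2) :=
  HasCompactSupport.intro (isCompact_sum_sq_le 1) fun _ hy =>
    hg _ (sub_nonpos.2 (not_le.1 hy).le)

theorem pd_comp_one_sub_sum_sq {g : ℝ → ℝ} (hg : Differentiable ℝ g) (i : Fin m)
    (y : Fin m → ℝ) :
    pd i (fun y => g (1 - ∑ j, y j ^ 2)) y = -2 * deriv g (1 - ∑ j, y j ^ 2) * y i := by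
  have hsq : HasFDerivAt (fun y : Fin m → ℝ => 1 - ∑ j, y j ^ 2)
      (-∑ j, (2 * y j) • ContinuousLinearMap.proj (R := ℝ) (φ := fun _ : Fin m => ℝ) j) y := by
    refine (HasFDerivAt.fun_sum fun j _ => ?_).const_sub 1
    simpa using (hasFDerivAt_apply (𝕜 := ℝ) j y).pow 2
  have hcomp := (hg (1 - ∑ j, y j ^ 2)).hasDerivAt.comp_hasFDerivAt y hsq
  change fderiv ℝ (g ∘ fun y => 1 - ∑ j, y j ^ 2) y _ = _
  rw [hcomp.fderiv]
  simp [Pi.single_apply]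
  ring

theorem deriv_expNegInvGlue (t : ℝ) : deriv expNegInvGlue t = t⁻¹ ^ 2 * expNegInvGlue t := by
  simpa using (expNegInvGlue.hasDerivAt_polynomial_eval_inv_mul 1 t).deriv

theorem exists_isRadialPotential (m : ℕ) :
    ∃ ψ Ψ : (Fin m → ℝ) → ℝ, IsRadialPotential ψ Ψ ∧ ∫ y, ψ y ≠ 0 := by
  have hg : ContDiff ℝ ∞ expNegInvGlue := expNegInvGlue.contDiff
  have hg' : ContDiff ℝ ∞ (deriv expNegInvGlue) := (contDiff_infty_iff_deriv.1 hg).2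
  have hr : ContDiff ℝ ∞ fun y : Fin m → ℝ => 1 - ∑ i, y i ^ 2 := by fun_prop
  have hsupp : HasCompactSupport fun y : Fin m → ℝ => deriv expNegInvGlue (1 - ∑ i, y i ^ 2) :=
    hasCompactSupport_comp_one_sub_sum_sq fun t ht => by
      rw [deriv_expNegInvGlue, expNegInvGlue.zero_of_nonpos ht, mul_zero]
  have hpos : 0 < ∫ y : Fin m → ℝ, deriv expNegInvGlue (1 - ∑ i, y i ^ 2) := by
    refine (hg'.comp hr).continuous.integral_pos_of_hasCompactSupport_nonneg_nonzero (x := 0)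
      hsupp (fun y => ?_) ?_
    · exact (deriv_expNegInvGlue _).symm ▸ mul_nonneg (sq_nonneg _) (expNegInvGlue.nonneg _)
    · simp [deriv_expNegInvGlue, (expNegInvGlue.pos_of_pos one_pos).ne']
  refine ⟨fun y => -2 * deriv expNegInvGlue (1 - ∑ i, y i ^ 2),
    fun y => expNegInvGlue (1 - ∑ i, y i ^ 2), ?_, ?_⟩
  · exact
      { contDiff_kernel := contDiff_const.mul (hg'.comp hr)
        hasCompactSupport_kernel := hsupp.mul_left
        contDiff := hg.comp hr
        hasCompactSupport :=
          hasCompactSupport_comp_one_sub_sum_sq fun _ => expNegInvGlue.zero_of_nonpos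
        pd_eq := pd_comp_one_sub_sum_sq (hg.differentiable (by simp)) }
  · rw [integral_const_mul]
    exact mul_ne_zero (by norm_num) hpos.ne'

theorem integral_smul_fderiv_add_smul_eq_zero {ψ Ψ : (Fin m → ℝ) → ℝ}
    (h : IsRadialPotential ψ Ψ) {v : (Fin m → ℝ) → E} (hv : ContDiff ℝ 2 v)
    (hΔ : coordLaplacian v = 0) (x : Fin m → ℝ) (R : ℝ) :
    ∫ y, ψ y • fderiv ℝ v (x + R • y) y = 0 := by
  have hgrad : ∀ i, ContDiff ℝ 1 fun y => pd i v (x + R • y) := fun i =>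
    (contDiff_pd hv one_add_one_eq_two.le i).comp (by fun_prop)
  have hdiv : ∀ y, ∑ i, pd i (fun y => pd i v (x + R • y)) y = 0 := fun y => by
    have hΔxy : ∑ i, pd i (pd i v) (x + R • y) = 0 := congrFun hΔ _
    simp only [pd_comp_add_smul, ← Finset.smul_sum, hΔxy, smul_zero]
  calc ∫ y, ψ y • fderiv ℝ v (x + R • y) y
      = ∫ y, ∑ i, pd i Ψ y • pd i v (x + R • y) := by
        simp only [← sum_smul_pd, Finset.smul_sum, smul_smul, h.pd_eq]
    _ = -∫ y, Ψ y • ∑ i, pd i (fun y => pd i v (x + R • y)) y := by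
        rw [integral_smul_sum_pd (h.contDiff.of_le ENat.LEInfty.out) h.hasCompactSupport hgrad,
          neg_neg]
    _ = 0 := by simp only [hdiv, smul_zero, integral_zero, neg_zero]

theorem integral_smul_comp_add_smul_of_coordLaplacian_eq_zero [CompleteSpace E]
    {ψ Ψ : (Fin m → ℝ) → ℝ} (h : IsRadialPotential ψ Ψ) {v : (Fin m → ℝ) → E}
    (hv : ContDiff ℝ 2 v) (hΔ : coordLaplacian v = 0) (x : Fin m → ℝ) (R : ℝ) :
    ∫ y, ψ y • v (x + R • y) = (∫ y, ψ y) • v x := by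
  have hderiv := fun r => hasDerivAt_integral_smul_comp_add_smul (ν := volume)
    h.contDiff_kernel.continuous h.hasCompactSupport_kernel (hv.of_le one_le_two) x r
  have hconst := is_const_of_deriv_eq_zero (fun r => (hderiv r).differentiableAt)
    (fun r => (hderiv r).deriv.trans (integral_smul_fderiv_add_smul_eq_zero h hv hΔ x r)) R 0
  simpa [integral_smul_const] using hconst

theorem integral_coordLaplacian_iterate_smul_comp_add_smul [CompleteSpace E]
    {ψ Ψ : (Fin m → ℝ) → ℝ} (h : IsRadialPotential ψ Ψ) {u : (Fin m → ℝ) → E}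
    (hu : ContDiff ℝ ∞ u) {k : ℕ} (hΔ : coordLaplacian^[k + 1] u = 0) (x : Fin m → ℝ) (R : ℝ) :
    ∫ y, coordLaplacian^[k] ψ y • u (x + R • y) =
      R ^ (2 * k) • (∫ y, ψ y) • coordLaplacian^[k] u x := by
  have hharm : coordLaplacian (coordLaplacian^[k] u) = 0 := by
    rwa [← Function.iterate_succ_apply' coordLaplacian]
  calc ∫ y, coordLaplacian^[k] ψ y • u (x + R • y)
      = ∫ y, ψ y • R ^ (2 * k) • coordLaplacian^[k] u (x + R • y) := by
        rw [← integral_smul_coordLaplacian_iterate h.contDiff_kernel h.hasCompactSupport_kernel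
          (f := fun y => u (x + R • y)) (hu.comp (by fun_prop)),
          coordLaplacian_iterate_comp_add_smul]
    _ = R ^ (2 * k) • ∫ y, ψ y • coordLaplacian^[k] u (x + R • y) := by
        simp only [smul_comm _ (R ^ (2 * k)), integral_smul]
    _ = R ^ (2 * k) • (∫ y, ψ y) • coordLaplacian^[k] u x := by
        rw [integral_smul_comp_add_smul_of_coordLaplacian_eq_zero h
          ((contDiff_coordLaplacian_iterate hu k).of_le ENat.LEInfty.out) hharm]

end MeanValue

section Liouville

variable {m : ℕ} {E : Type*} [NormedAddCommGroup E] [NormedSpace ℝ E] {p : ℝ≥0∞}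

theorem enorm_integral_smul_le_eLpNorm_mul_eLpNorm {V : Type*} [MeasurableSpace V] {μ : Measure V}
    {q : ℝ≥0∞} [ENNReal.HolderConjugate q p] {χ : V → ℝ} {u : V → E}
    (hχ : AEStronglyMeasurable χ μ) (hu : AEStronglyMeasurable u μ) :
    ‖∫ y, χ y • u y ∂μ‖ₑ ≤ eLpNorm χ q μ * eLpNorm u p μ :=
  calc ‖∫ y, χ y • u y ∂μ‖ₑ ≤ ∫⁻ y, ‖χ y • u y‖ₑ ∂μ := enorm_integral_le_lintegral_enorm _
    _ = eLpNorm (χ • u) 1 μ := eLpNorm_one_eq_lintegral_enorm.symm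
    _ ≤ _ := eLpNorm_smul_le_mul_eLpNorm hu hχ

theorem enorm_integral_smul_coordLaplacian_iterate_le [CompleteSpace E] {q : ℝ≥0∞}
    [ENNReal.HolderConjugate q p] {ψ Ψ : (Fin m → ℝ) → ℝ} (h : IsRadialPotential ψ Ψ)
    {u : (Fin m → ℝ) → E} (hu : ContDiff ℝ ∞ u) {k : ℕ} (hΔ : coordLaplacian^[k + 1] u = 0)
    (x : Fin m → ℝ) {R : ℝ} (hR : 1 ≤ R) :
    ‖(∫ y, ψ y) • coordLaplacian^[k] u x‖ₑ ≤
      eLpNorm (coordLaplacian^[k] ψ) q volume * eLpNorm (fun y => u (x + R • y)) p volume :=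
  calc ‖(∫ y, ψ y) • coordLaplacian^[k] u x‖ₑ
      ≤ ‖R ^ (2 * k)‖ₑ * ‖(∫ y, ψ y) • coordLaplacian^[k] u x‖ₑ := by
        refine le_mul_of_one_le_left' ?_
        rw [Real.enorm_of_nonneg (by positivity), ENNReal.one_le_ofReal]
        exact one_le_pow₀ hR
    _ = ‖∫ y, coordLaplacian^[k] ψ y • u (x + R • y)‖ₑ := by
        rw [← enorm_smul, ← integral_coordLaplacian_iterate_smul_comp_add_smul h hu hΔ]
    _ ≤ _ := enorm_integral_smul_le_eLpNorm_mul_eLpNorm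
        (contDiff_coordLaplacian_iterate h.contDiff_kernel k).continuous.aestronglyMeasurable
        (hu.continuous.comp (by fun_prop)).aestronglyMeasurable

theorem coordLaplacian_iterate_eq_zero_of_succ [CompleteSpace E] (hm : 0 < m) (hp1 : 1 ≤ p)
    (hp : p ≠ ⊤) {u : (Fin m → ℝ) → E} (hu : ContDiff ℝ ∞ u) (hLp : MemLp u p) {k : ℕ}
    (hΔ : coordLaplacian^[k + 1] u = 0) : coordLaplacian^[k] u = 0 := by
  obtain ⟨ψ, Ψ, h, hψ⟩ := exists_isRadialPotential m
  have : Nonempty (Fin m) := ⟨⟨0, hm⟩⟩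
  have : ENNReal.HolderConjugate p.conjExponent p := (ENNReal.HolderConjugate.conjExponent hp1).symm
  have hχ : MemLp (coordLaplacian^[k] ψ) p.conjExponent volume :=
    (contDiff_coordLaplacian_iterate h.contDiff_kernel k).continuous.memLp_of_hasCompactSupport
      (hasCompactSupport_coordLaplacian_iterate h.hasCompactSupport_kernel k)
  funext x
  have hlim := ENNReal.Tendsto.const_mul
    (tendsto_eLpNorm_comp_add_smul_atTop (one_pos.trans_le hp1).ne' hp hLp x)
    (Or.inr hχ.eLpNorm_ne_top)
  rw [mul_zero] at hlim
  have hzero : ‖(∫ y, ψ y) • coordLaplacian^[k] u x‖ₑ ≤ 0 := ge_of_tendsto hlim <| by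
    filter_upwards [eventually_ge_atTop 1] with R hR
    exact enorm_integral_smul_coordLaplacian_iterate_le h hu hΔ x hR
  simpa [hψ] using hzero

theorem eq_zero_of_coordLaplacian_iterate_eq_zero [CompleteSpace E] (hm : 0 < m) (hp1 : 1 ≤ p)
    (hp : p ≠ ⊤) {u : (Fin m → ℝ) → E} (hu : ContDiff ℝ ∞ u) (hLp : MemLp u p) {N : ℕ}
    (hΔ : coordLaplacian^[N] u = 0) : u = 0 := by
  induction N with
  | zero => exact hΔ
  | succ k ih => exact ih (coordLaplacian_iterate_eq_zero_of_succ hm hp1 hp hu hLp hΔ)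

end Liouville

theorem memLp_pd_of_integrable_energy {m n : ℕ} {φ : (Fin m → ℝ) → Fin n → ℝ}
    (hφ : ContDiff ℝ 1 φ) (hE : Integrable fun x =>
      (∑ i, ∑ α, (pd i φ x α) ^ 2) +
      (∑ i, ∑ j, ∑ α, (pd j (pd i φ) x α) ^ 2) +
      (∑ i, ∑ j, ∑ k, ∑ α, (pd k (pd j (pd i φ)) x α) ^ 2)) (i : Fin m) :
    MemLp (pd i φ) 2 := by
  have hcont : Continuous (pd i φ) := continuous_pd hφ i
  refine memLp_pi_iff.2 fun α => ?_
  refine (memLp_two_iff_integrable_sq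
    ((continuous_apply α).comp hcont).aestronglyMeasurable).2 ?_
  refine hE.mono' (((continuous_apply α).comp hcont).pow 2).aestronglyMeasurable
    (.of_forall fun x => ?_)
  calc ‖pd i φ x α ^ 2‖ = pd i φ x α ^ 2 := Real.norm_of_nonneg (sq_nonneg _)
    _ ≤ ∑ β, pd i φ x β ^ 2 :=
        Finset.single_le_sum (f := fun β => pd i φ x β ^ 2) (fun _ _ => sq_nonneg _)
          (Finset.mem_univ α)
    _ ≤ ∑ j, ∑ β, pd j φ x β ^ 2 :=
        Finset.single_le_sum (f := fun j => ∑ β, pd j φ x β ^ 2) (fun _ _ => by positivity)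
          (Finset.mem_univ i)
    _ ≤ _ := by
        rw [add_assoc]
        exact le_add_of_nonneg_right (by positivity)

theorem triharmonic_liouville_flat_constant_general {m N : ℕ} {E : Type*} [NormedAddCommGroup E]
    [NormedSpace ℝ E] [CompleteSpace E] {p : ℝ≥0∞} (hp1 : 1 ≤ p) (hp : p ≠ ⊤)
    {φ : (Fin m → ℝ) → E} (hφ : ContDiff ℝ ∞ φ) (hΔ : coordLaplacian^[N] φ = 0)
    (hLp : ∀ i, MemLp (pd i φ) p) (x y : Fin m → ℝ) : φ x = φ y := by
  refine eq_const_of_pd_eq_zero (hφ.differentiable (by simp)) (fun k => ?_) x y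
  refine eq_zero_of_coordLaplacian_iterate_eq_zero k.pos hp1 hp (contDiff_pd hφ (by simp) k) (hLp k)
    (N := N) ?_
  rw [coordLaplacian_iterate_pd hφ, hΔ]
  funext z
  simp [pd]

/-- Flat Liouville theorem for triharmonic maps, constancy version: if `φ : ℝ^m → ℝ^n` is
smooth with `Δ³φ = 0`, the energies of `φ` up to third order derivatives are finite, and
`m > 2`, `m ≠ 6`, then `φ` is constant. -/
theorem triharmonic_liouville_flat_constant {m n : ℕ}
    (φ : (Fin m → ℝ) → Fin n → ℝ) (hφ : ContDiff ℝ (⊤ : ℕ∞) φ)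
    (htri : ∀ x, lap (lap (lap φ)) x = 0)
    (hE : Integrable (fun x =>
      (∑ i, ∑ α, (pd i φ x α) ^ 2) +
      (∑ i, ∑ j, ∑ α, (pd j (pd i φ) x α) ^ 2) +
      (∑ i, ∑ j, ∑ k, ∑ α, (pd k (pd j (pd i φ)) x α) ^ 2)))
    (hm2 : 2 < m) (hm6 : m ≠ 6) :
    ∀ x y, φ x = φ y :=
  triharmonic_liouville_flat_constant_general (N := 3) one_le_two ENNReal.ofNat_ne_top hφ
    (funext htri) (memLp_pd_of_integrable_energy (hφ.of_le ENat.LEInfty.out) hE)
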